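/- Let X be a closed operator with compact resolvent that commutes with each member of a resolution of the identity {P_{σ_n}}. Then every point λ of σ(X) is an eigenvalue, and for any eigenvector x of X with eigenvalue λ there exists n such that P_{σ_n}x ≠ 0 and P_{σ_n}x is an eigenvector of the restriction X|_{P_{σ_n}H} with eigenvalue λ. -/

import Mathlib

/-!
For the first claim, let `R = (X - μ₀)⁻¹` be the compact resolvent and `c = μ - μ₀`. If `c = 0`,
then `R` itself inverts `X - μ`. Otherwise `X - μ` factors on `D` as `c (c⁻¹ - R) (X - μ₀)`, so
by the Fredholm alternative for `R` at `c⁻¹ ≠ 0` either `R` has an eigenvector with eigenvalue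
`c⁻¹`, which is then an eigenvector of `X` with eigenvalue `μ`, or `c⁻¹ - R` has a bounded inverse
and `c⁻¹ R (c⁻¹ - R)⁻¹` is the resolvent of `X` at `μ`.

For the second claim, `x = ∑ P n x ≠ 0` forces some `P n x ≠ 0`, and commutation gives
`X (P n x) = P n (X x) = μ P n x`.
-/

/-- The spectrum of the (possibly unbounded) operator `X` with domain `D`, considered on
the invariant subspace `V`. -/
def blockSpectrum {H : Type*} [NormedAddCommGroup H] [InnerProductSpace ℂ H]
    [CompleteSpace H] (X : H →ₗ[ℂ] H) (D V : Submodule ℂ H) : Set ℂ :=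
  {μ : ℂ | ¬ ∃ R : H →L[ℂ] H,
    (∀ y ∈ V, R y ∈ D ⊓ V) ∧
    (∀ x, x ∈ D → x ∈ V → R (X x - μ • x) = x) ∧
    (∀ y ∈ V, X (R y) - μ • R y = y)}

/-- For a closed operator with compact resolvent commuting with a
resolution of the identity `{P n}`, every spectral point is an eigenvalue, and every
eigenvector `x` with eigenvalue `λ` has some nonzero component `P n x`, which is an
eigenvector of the restriction of `X` to the range of `P n` for the same eigenvalue. -/
theorem stmt10 {H : Type*} [NormedAddCommGroup H] [InnerProductSpace ℂ H] [CompleteSpace H]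
    {I : Type*} [Countable I]
    (X : H →ₗ[ℂ] H) (D : Submodule ℂ H)
    (P : I → H →L[ℂ] H)
    (hsa : ∀ n, IsSelfAdjoint (P n))
    (hidem : ∀ n, IsIdempotentElem (P n))
    (hdisj : ∀ m n, m ≠ n → (P m) ∘L (P n) = 0)
    (hres : ∀ x : H, HasSum (fun n => P n x) x)
    (hinv : ∀ n, ∀ x ∈ D, P n x ∈ D)
    (hcomm : ∀ n, ∀ x ∈ D, X (P n x) = P n (X x))
    (hcompres : ∃ (μ₀ : ℂ) (R : H →L[ℂ] H), IsCompactOperator R ∧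
      (∀ y : H, R y ∈ D) ∧ (∀ x ∈ D, R (X x - μ₀ • x) = x) ∧
      (∀ y : H, X (R y) - μ₀ • R y = y)) :
    (∀ μ ∈ blockSpectrum X D ⊤, ∃ x, x ∈ D ∧ x ≠ 0 ∧ X x = μ • x) ∧
    (∀ (μ : ℂ) (x : H), x ∈ D → x ≠ 0 → X x = μ • x →
      ∃ n, P n x ≠ 0 ∧ P n x ∈ D ∧ X (P n x) = μ • P n x) := by
  constructor
  · intro μ hμ
    obtain ⟨μ₀, R, hRc, hRD, hRl, hRr⟩ := hcompres
    by_contra hno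
    apply hμ
    by_cases hc : μ - μ₀ = 0
    · obtain rfl : μ = μ₀ := sub_eq_zero.mp hc
      exact ⟨R, fun y _ => ⟨hRD y, trivial⟩, fun x hx _ => hRl x hx, fun y _ => hRr y⟩
    rcases hRc.hasEigenvalue_or_mem_resolventSet (inv_ne_zero hc) with h | h
    · exfalso
      obtain ⟨x, hx⟩ := h.exists_hasEigenvector
      have hx1 : R x = (μ - μ₀)⁻¹ • x := hx.apply_eq_smul
      have hxR : x = (μ - μ₀) • R x := by rw [hx1, smul_inv_smul₀ hc]
      refine hno ⟨x, ?_, hx.2, ?_⟩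
      · rw [hxR]
        exact D.smul_mem _ (hRD x)
      · have h1 : X x - μ₀ • x = (μ - μ₀) • x := by
          conv_lhs => rw [hxR]
          rw [map_smul, smul_comm μ₀, ← smul_sub, hRr]
        rw [sub_smul] at h1
        exact sub_left_injective h1
    · rw [spectrum.mem_resolventSet_iff] at h
      obtain ⟨A, hA1, hA2⟩ := isUnit_iff_exists.mp h
      have hr : ∀ y, (μ - μ₀)⁻¹ • A y - R (A y) = y := fun y => by
        simpa [Algebra.algebraMap_eq_smul_one] using DFunLike.congr_fun hA1 y
      have hl : ∀ z, A ((μ - μ₀)⁻¹ • z - R z) = z := fun z => by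
        simpa [Algebra.algebraMap_eq_smul_one] using DFunLike.congr_fun hA2 z
      refine ⟨(μ - μ₀)⁻¹ • (R ∘L A), fun y _ => ⟨D.smul_mem _ (hRD _), trivial⟩, ?_, ?_⟩
      · intro x hx _
        have h1 : X x - μ • x = (μ - μ₀) • ((μ - μ₀)⁻¹ • (X x - μ₀ • x) - R (X x - μ₀ • x)) := by
          rw [hRl x hx, smul_sub, smul_inv_smul₀ hc]
          module
        change (μ - μ₀)⁻¹ • R (A (X x - μ • x)) = x
        rw [h1, map_smul A, hl, map_smul R, inv_smul_smul₀ hc, hRl x hx]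
      · intro y _
        change X ((μ - μ₀)⁻¹ • R (A y)) - μ • (μ - μ₀)⁻¹ • R (A y) = y
        have h1 : X (R (A y)) = A y + μ₀ • R (A y) := sub_eq_iff_eq_add.mp (hRr (A y))
        rw [map_smul, h1]
        refine Eq.trans ?_ (hr y)
        have h2 : R (A y) = (μ - μ₀) • (μ - μ₀)⁻¹ • R (A y) := (smul_inv_smul₀ hc _).symm
        conv_rhs => rw [h2]
        module
  · intro μ x hx hx0 hX
    have hne : ∃ n, P n x ≠ 0 := by
      by_contra! h
      exact hx0 ((hres x).unique (by simpa only [h] using hasSum_zero))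
    obtain ⟨n, hn⟩ := hne
    exact ⟨n, hn, hinv n x hx, by rw [hcomm n x hx, hX, map_smul]⟩
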